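/- arXiv:2506.12463 — 3 statements merged into one kernel-verified Lean document; each statement's English description precedes it below -/
import Mathlib

section
/- Let n ≥ 1, let W be an n×n real row-stochastic matrix (W_{ij} ≥ 0 and Σ_j W_{ij} = 1 for every i), and let Θ = diag(θ) with θ_i ∈ [0,1] for all i. Assume that for every agent i, either θ_i > 0 or there exist k ≥ 1 and an agent j with θ_j > 0 such that (W^k)_{ij} > 0. Then: (a) the matrix (I − Θ)W is Schur stable, i.e., every complex eigenvalue of (I − Θ)W has modulus strictly less than 1 (in particular I − (I − Θ)W is invertible); and (b) the matrix P = (I − (I − Θ)W)^{-1} Θ is row-stochastic, i.e., all its entries are nonnegative and each of its rows sums to 1. -/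
/-!
A row-substochastic matrix `A` in which every state leads, along positive entries, to a row of sum
less than one satisfies a maximum principle: a vector `u ≤ A u` with a positive maximum would take
that maximum at every state reachable from a maximizer, and every such row would sum to one.
Hence `1 - A` is inverse-monotone, so it is invertible with a nonnegative inverse, and it sends the
all-ones vector to the vector of row deficiencies of `A`. If `A v = μ v` with `1 ≤ |μ|`, then
`|v| ≤ A |v|`, so `v = 0`. For `A = (1 - Θ) W` the row deficiencies are the stubbornness
coefficients, and a path of `W` is a path of `A` up to its first stubborn agent.
-/

open Matrix Finset

variable {ι κ R K 𝕜 : Type*} [Fintype ι]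

/-- Row-substochastic matrices from each of whose states a path of positive entries, possibly of
length zero, leads to a row of sum less than one; equivalently, nonnegative `A` for which `1 - A` is
weakly chained diagonally dominant with nonnegative diagonal. -/
structure IsWeaklyChainedSubstochastic [Semiring R] [PartialOrder R] (A : Matrix ι ι R) :
    Prop where
  nonneg : ∀ i j, 0 ≤ A i j
  sum_row_le_one : ∀ i, ∑ j, A i j ≤ 1
  exists_reachable_sum_row_lt_one :
    ∀ i, ∃ j, Relation.ReflTransGen (fun a b ↦ 0 < A a b) i j ∧ ∑ k, A j k < 1

lemma one_sub_mulVec_one_apply [DecidableEq ι] [Ring R] (A : Matrix ι ι R) (i : ι) :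
    ((1 - A) *ᵥ 1) i = 1 - ∑ j, A i j := by
  rw [sub_mulVec, one_mulVec, Pi.sub_apply, mulVec_apply_eq_sum]
  simp only [Pi.one_apply, mul_one]

section OrderedRing

variable [Ring R] [LinearOrder R] [IsStrictOrderedRing R]

lemma reflTransGen_of_pow_apply_pos [DecidableEq ι] {A : Matrix ι ι R} (hA : ∀ i j, 0 ≤ A i j)
    {k : ℕ} {i j : ι} (h : 0 < (A ^ k) i j) :
    Relation.ReflTransGen (fun a b ↦ 0 < A a b) i j := by
  let := toQuiver A
  obtain ⟨p, -⟩ := (pow_apply_pos_iff_nonempty_path hA k i j).1 h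
  clear h
  induction p with
  | nil => exact .refl
  | cons _ e ih => exact ih.tail e.down

lemma sum_eq_one_and_eq_of_le_dotProduct {w u : ι → R} {M : R} (hw : ∀ j, 0 ≤ w j)
    (hw_sum : ∑ j, w j ≤ 1) (hM : 0 < M) (hu : ∀ j, u j ≤ M) (h : M ≤ w ⬝ᵥ u) :
    ∑ j, w j = 1 ∧ ∀ j, 0 < w j → u j = M := by
  have gap_nonneg : ∀ j, 0 ≤ w j * (M - u j) := fun j ↦ mul_nonneg (hw j) (sub_nonneg.2 (hu j))
  have sum_gap : ∑ j, w j * (M - u j) = (∑ j, w j) * M - w ⬝ᵥ u := by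
    simp only [mul_sub, sum_sub_distrib, sum_mul, dotProduct]
  have sum_gap_nonneg : 0 ≤ ∑ j, w j * (M - u j) := sum_nonneg fun j _ ↦ gap_nonneg j
  have hsum : ∑ j, w j = 1 := by
    refine hw_sum.antisymm (le_of_mul_le_mul_right ?_ hM)
    rw [one_mul]
    exact h.trans (sub_nonneg.1 (sum_gap ▸ sum_gap_nonneg))
  have sum_gap_eq_zero : ∑ j, w j * (M - u j) = 0 := by
    refine le_antisymm ?_ sum_gap_nonneg
    rw [sum_gap, hsum, one_mul]
    exact sub_nonpos.2 h
  refine ⟨hsum, fun j hj ↦ ?_⟩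
  have gap_eq_zero := (sum_eq_zero_iff_of_nonneg fun j _ ↦ gap_nonneg j).1 sum_gap_eq_zero j
    (mem_univ j)
  exact (sub_eq_zero.1 ((mul_eq_zero.1 gap_eq_zero).resolve_left hj.ne')).symm

end OrderedRing

namespace IsWeaklyChainedSubstochastic

section OrderedRing

variable [Ring R] [LinearOrder R] [IsStrictOrderedRing R] {A : Matrix ι ι R}

theorem nonpos_of_le_mulVec (hA : IsWeaklyChainedSubstochastic A) {u : ι → R}
    (hu : u ≤ A *ᵥ u) : u ≤ 0 := by
  intro i
  by_contra! hi
  have : Nonempty ι := ⟨i⟩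
  obtain ⟨m, hm⟩ := Finite.exists_max u
  have row_of_max : ∀ a, u a = u m → ∑ b, A a b = 1 ∧ ∀ b, 0 < A a b → u b = u m := fun a ha ↦
    sum_eq_one_and_eq_of_le_dotProduct (hA.nonneg a) (hA.sum_row_le_one a) (hi.trans_le (hm i)) hm
      (ha ▸ hu a)
  obtain ⟨j, hmj, hj⟩ := hA.exists_reachable_sum_row_lt_one m
  have hj_max : u j = u m := by
    clear hj
    induction hmj with
    | refl => rfl
    | tail _ hbc ih => exact (row_of_max _ ih).2 _ hbc
  exact hj.ne (row_of_max j hj_max).1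

theorem le_of_one_sub_mulVec_le [DecidableEq ι] (hA : IsWeaklyChainedSubstochastic A)
    {u v : ι → R} (h : (1 - A) *ᵥ u ≤ (1 - A) *ᵥ v) : u ≤ v := by
  refine sub_nonpos.1 (hA.nonpos_of_le_mulVec ?_)
  rw [← sub_nonpos, ← mulVec_sub, sub_mulVec, one_mulVec] at h
  exact sub_nonpos.1 h

end OrderedRing

section OrderedField

variable [DecidableEq ι] [Field K] [LinearOrder K] [IsStrictOrderedRing K] {A : Matrix ι ι K}

theorem isUnit_one_sub (hA : IsWeaklyChainedSubstochastic A) : IsUnit (1 - A) :=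
  mulVec_injective_iff_isUnit.1 fun _ _ h ↦
    (hA.le_of_one_sub_mulVec_le h.le).antisymm (hA.le_of_one_sub_mulVec_le h.ge)

theorem inv_one_sub_apply_nonneg (hA : IsWeaklyChainedSubstochastic A) (i j : ι) :
    0 ≤ (1 - A)⁻¹ i j := by
  have hdet : IsUnit (1 - A).det := (isUnit_iff_isUnit_det _).1 hA.isUnit_one_sub
  suffices 0 ≤ (1 - A)⁻¹ *ᵥ Pi.single j 1 by simpa using this i
  apply hA.le_of_one_sub_mulVec_le
  rw [mulVec_zero, mulVec_mulVec, mul_nonsing_inv _ hdet, one_mulVec]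
  exact Pi.single_nonneg.2 zero_le_one

theorem inv_one_sub_mul_diagonal_mem_rowStochastic (hA : IsWeaklyChainedSubstochastic A) :
    (1 - A)⁻¹ * diagonal ((1 - A) *ᵥ 1) ∈ rowStochastic K ι := by
  have hdet : IsUnit (1 - A).det := (isUnit_iff_isUnit_det _).1 hA.isUnit_one_sub
  have deficiency_nonneg : ∀ j, 0 ≤ ((1 - A) *ᵥ 1) j := fun j ↦ by
    rw [one_sub_mulVec_one_apply]
    exact sub_nonneg.2 (hA.sum_row_le_one j)
  refine mem_rowStochastic.2 ⟨fun i j ↦ ?_, ?_⟩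
  · rw [mul_diagonal]
    exact mul_nonneg (hA.inv_one_sub_apply_nonneg i j) (deficiency_nonneg j)
  · have diagonal_mulVec_one : diagonal ((1 - A) *ᵥ 1) *ᵥ 1 = (1 - A) *ᵥ 1 := by
      ext j
      rw [mulVec_diagonal, Pi.one_apply, mul_one]
    rw [← mulVec_mulVec, diagonal_mulVec_one, mulVec_mulVec, nonsing_inv_mul _ hdet, one_mulVec]

end OrderedField

end IsWeaklyChainedSubstochastic

section Spectrum

variable [NormedField 𝕜] [NormedAlgebra ℝ 𝕜]

lemma norm_map_algebraMap_mulVec_le {A : Matrix κ ι ℝ} (hA : ∀ i j, 0 ≤ A i j) (v : ι → 𝕜)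
    (i : κ) : ‖(A.map (algebraMap ℝ 𝕜) *ᵥ v) i‖ ≤ (A *ᵥ fun j ↦ ‖v j‖) i := by
  simp only [mulVec, dotProduct, map_apply]
  refine (norm_sum_le _ _).trans_eq (sum_congr rfl fun j _ ↦ ?_)
  rw [norm_mul, norm_algebraMap', Real.norm_of_nonneg (hA i j)]

theorem IsWeaklyChainedSubstochastic.norm_lt_one_of_mem_spectrum [DecidableEq ι]
    {A : Matrix ι ι ℝ} (hA : IsWeaklyChainedSubstochastic A) {μ : 𝕜}
    (hμ : μ ∈ spectrum 𝕜 (A.map (algebraMap ℝ 𝕜))) : ‖μ‖ < 1 := by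
  rw [← spectrum_toLin', ← Module.End.hasEigenvalue_iff_mem_spectrum] at hμ
  obtain ⟨v, hv⟩ := hμ.exists_hasEigenvector
  by_contra! hge
  have norm_le_mulVec : (fun i ↦ ‖v i‖) ≤ A *ᵥ fun i ↦ ‖v i‖ := fun i ↦
    calc ‖v i‖ ≤ ‖μ‖ * ‖v i‖ := le_mul_of_one_le_left (norm_nonneg _) hge
      _ = ‖(A.map (algebraMap ℝ 𝕜) *ᵥ v) i‖ := by
        rw [← toLin'_apply, hv.apply_eq_smul, Pi.smul_apply, norm_smul]
      _ ≤ (A *ᵥ fun j ↦ ‖v j‖) i := norm_map_algebraMap_mulVec_le hA.nonneg v i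
  exact hv.2 (funext fun i ↦ norm_le_zero_iff.1 (hA.nonpos_of_le_mulVec norm_le_mulVec i))

end Spectrum

section FriedkinJohnsen

variable [DecidableEq ι]

lemma one_sub_diagonal_mul_apply [Ring R] (θ : ι → R) (W : Matrix ι κ R) (i : ι) (j : κ) :
    ((1 - diagonal θ) * W : Matrix ι κ R) i j = (1 - θ i) * W i j := by
  rw [Matrix.sub_mul, Matrix.one_mul, Matrix.sub_apply, diagonal_mul, sub_mul, one_mul]

lemma exists_reachable_pos_one_sub_diagonal_mul [Ring R] [PartialOrder R]
    {W : Matrix ι ι R} {θ : ι → R} (hθ : ∀ i, 0 ≤ θ i) {i j : ι}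
    (hij : Relation.ReflTransGen (fun a b ↦ 0 < W a b) i j) (hj : 0 < θ j) :
    ∃ l, Relation.ReflTransGen (fun a b ↦ 0 < ((1 - diagonal θ) * W) a b) i l ∧ 0 < θ l := by
  induction hij using Relation.ReflTransGen.head_induction_on with
  | refl => exact ⟨j, .refl, hj⟩
  | @head a b hab _ ih =>
    rcases (hθ a).eq_or_lt with ha | ha
    · obtain ⟨l, hbl, hl⟩ := ih
      refine ⟨l, .head ?_ hbl, hl⟩
      rwa [one_sub_diagonal_mul_apply, ← ha, sub_zero, one_mul]
    · exact ⟨a, .refl, ha⟩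

lemma sum_row_one_sub_diagonal_mul [Ring R] [PartialOrder R] [IsOrderedRing R]
    {W : Matrix ι ι R} (hW : W ∈ rowStochastic R ι) (θ : ι → R) (i : ι) :
    ∑ j, ((1 - diagonal θ) * W) i j = 1 - θ i := by
  simp only [one_sub_diagonal_mul_apply, ← mul_sum, sum_row_of_mem_rowStochastic hW, mul_one]

lemma one_sub_one_sub_diagonal_mul_mulVec_one [Ring R] [PartialOrder R] [IsOrderedRing R]
    {W : Matrix ι ι R} (hW : W ∈ rowStochastic R ι) (θ : ι → R) :
    (1 - (1 - diagonal θ) * W) *ᵥ 1 = θ := by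
  ext i
  rw [one_sub_mulVec_one_apply, sum_row_one_sub_diagonal_mul hW, sub_sub_cancel]

theorem isWeaklyChainedSubstochastic_one_sub_diagonal_mul [Ring R] [LinearOrder R]
    [IsStrictOrderedRing R] {W : Matrix ι ι R} (hW : W ∈ rowStochastic R ι) {θ : ι → R}
    (hθ : ∀ i, θ i ∈ Set.Icc 0 1) (hreach : ∀ i, ∃ k j, 0 < θ j ∧ 0 < (W ^ k) i j) :
    IsWeaklyChainedSubstochastic ((1 - diagonal θ) * W) where
  nonneg i j := by
    rw [one_sub_diagonal_mul_apply]
    exact mul_nonneg (sub_nonneg.2 (hθ i).2) (nonneg_of_mem_rowStochastic hW)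
  sum_row_le_one i := by
    rw [sum_row_one_sub_diagonal_mul hW]
    exact sub_le_self _ (hθ i).1
  exists_reachable_sum_row_lt_one i := by
    obtain ⟨k, j, hj, hij⟩ := hreach i
    obtain ⟨l, hil, hl⟩ := exists_reachable_pos_one_sub_diagonal_mul (fun a ↦ (hθ a).1)
      (reflTransGen_of_pow_apply_pos hW.1 hij) hj
    exact ⟨l, hil, (sum_row_one_sub_diagonal_mul hW θ l).trans_lt (sub_lt_self _ hl)⟩

end FriedkinJohnsen

theorem fj_schur_stable_and_P_stochastic_general [DecidableEq ι] {W : Matrix ι ι ℝ}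
    (hW : W ∈ rowStochastic ℝ ι) {θ : ι → ℝ} (hθ : ∀ i, θ i ∈ Set.Icc (0 : ℝ) 1)
    (hreach : ∀ i, ∃ k j, 0 < θ j ∧ 0 < (W ^ k) i j) :
    (∀ μ ∈ spectrum ℂ (((1 - diagonal θ) * W).map Complex.ofReal), ‖μ‖ < 1) ∧
    IsUnit (1 - (1 - diagonal θ) * W) ∧
    (1 - (1 - diagonal θ) * W)⁻¹ * diagonal θ ∈ rowStochastic ℝ ι := by
  have hA := isWeaklyChainedSubstochastic_one_sub_diagonal_mul hW hθ hreach
  refine ⟨fun _ ↦ hA.norm_lt_one_of_mem_spectrum, hA.isUnit_one_sub, ?_⟩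
  simpa only [one_sub_one_sub_diagonal_mul_mulVec_one hW θ] using
    hA.inv_one_sub_mul_diagonal_mem_rowStochastic

/-- FJ model convergence matrix: Schur stability of `(I-Θ)W` and row-stochasticity of
`P = (I - (I-Θ)W)⁻¹ Θ`. -/
theorem fj_schur_stable_and_P_stochastic
    (n : ℕ) (hn : 1 ≤ n) (W : Matrix (Fin n) (Fin n) ℝ)
    (hW0 : ∀ i j, 0 ≤ W i j) (hW1 : ∀ i, ∑ j, W i j = 1)
    (θ : Fin n → ℝ) (hθ : ∀ i, θ i ∈ Set.Icc (0 : ℝ) 1)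
    (hreach : ∀ i, 0 < θ i ∨ ∃ k, 1 ≤ k ∧ ∃ j, 0 < θ j ∧ 0 < (W ^ k) i j) :
    (∀ μ ∈ spectrum ℂ (((1 - Matrix.diagonal θ) * W).map (Complex.ofReal)),
        ‖μ‖ < 1) ∧
    IsUnit (1 - (1 - Matrix.diagonal θ) * W) ∧
    (∀ i j, 0 ≤ ((1 - (1 - Matrix.diagonal θ) * W)⁻¹ * Matrix.diagonal θ) i j) ∧
    (∀ i, ∑ j, ((1 - (1 - Matrix.diagonal θ) * W)⁻¹ * Matrix.diagonal θ) i j = 1) := by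
  simpa only [mem_rowStochastic_iff_sum] using
    fj_schur_stable_and_P_stochastic_general (mem_rowStochastic_iff_sum.2 ⟨hW0, hW1⟩) hθ fun i ↦
      (hreach i).elim (fun h ↦ ⟨0, i, h, by simp⟩) fun ⟨k, _, j, h⟩ ↦ ⟨k, j, h⟩
end

section
/- Assume W is strongly connected, ω ∈ (0,1), and there is θ ∈ (0,1] with θ ≤ θ_i ≤ 1 for all i ∈ V. Let S ⊆ V be nonempty with θ_i < 1 for some i ∈ S. For ℓ ∈ ℕ define the truncated absorbing probability p_ℓ = (1/n) 𝟙ᵀ (Σ_{k=0}^{ℓ} H(S)^k)(I − Θ) ω Σ_{j∈S} e_j and the exact absorbing probability q = (1/n) 𝟙ᵀ (I − H(S))^{-1}(I − Θ) ω Σ_{j∈S} e_j (so 0 < p_ℓ ≤ q ≤ 1). Let ε, δ, σ ∈ (0,1) and let r ∈ ℕ and ℓ ∈ ℕ satisfy r ≥ 3 log(2/δ)/(σ² ε² p_ℓ) and ℓ ≥ (log(θ(1−σ) ε p_ℓ) − log ω)/log(1−θ) − 2. Let X₁,…,X_r be independent Bernoulli random variables, each equal to 1 with probability p_ℓ and 0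 otherwise, and let X̄ = (1/r) Σ_{k=1}^{r} X_k. Then ℙ( |X̄ − q| < ε p_ℓ ) ≥ 1 − δ. -/
open Matrix Finset

/-- `H(S) = (I - ω Σ_{j∈S} e_j e_jᵀ) (I - Θ) W`. -/
noncomputable def Hmat {n : ℕ} (W : Matrix (Fin n) (Fin n) ℝ) (θ : Fin n → ℝ) (ω : ℝ)
    (S : Finset (Fin n)) : Matrix (Fin n) (Fin n) ℝ :=
  (1 - Matrix.diagonal (fun i => if i ∈ S then ω else 0)) *
    ((1 - Matrix.diagonal θ) * W)

/-- `p₀(S) = (I - H(S))⁻¹ (I - Θ) ω Σ_{j∈S} e_j`. -/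
noncomputable def p0vec {n : ℕ} (W : Matrix (Fin n) (Fin n) ℝ) (θ : Fin n → ℝ) (ω : ℝ)
    (S : Finset (Fin n)) : Fin n → ℝ :=
  ((1 - Hmat W θ ω S)⁻¹ * (1 - Matrix.diagonal θ)).mulVec
    (fun j => if j ∈ S then ω else 0)

/-- The influencer's social power `sp₀(S) = (𝟙ᵀ p₀(S) + 1)/(n+1)`. -/
noncomputable def sp0 {n : ℕ} (W : Matrix (Fin n) (Fin n) ℝ) (θ : Fin n → ℝ) (ω : ℝ)
    (S : Finset (Fin n)) : ℝ :=
  ((∑ i, p0vec W θ ω S i) + 1) / (n + 1)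

/-!
The `ℓ^∞` operator norm of `H(S)` is at most `1 - θ`, so the Neumann series of `(I - H(S))⁻¹`
converges geometrically and truncating it at length `ℓ` costs at most `(1 - θ)^(ℓ + 2) ω / θ`; the
lower bound on `ℓ` makes this at most `(1 - σ) ε p_ℓ`. The remaining error `σ ε p_ℓ` is left to the
multiplicative Chernoff bound, whose failure probability `2 exp (-r p_ℓ (σ ε)² / 3)` is at most `δ`
by the lower bound on `r`.
-/

section TruncatedGeometricSeries

lemma norm_inverse_one_sub_sub_geom_sum_le {R : Type*} [NormedRing R] [NormOneClass R]
    [HasSummableGeomSeries R] {x : R} (hx : ‖x‖ < 1) (N : ℕ) :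
    ‖Ring.inverse (1 - x) - ∑ k ∈ range N, x ^ k‖ ≤ ‖x‖ ^ N / (1 - ‖x‖) := by
  have h_inv : ‖Ring.inverse (1 - x)‖ ≤ (1 - ‖x‖)⁻¹ := by
    simpa [← geom_series_eq_inverse x hx] using tsum_geometric_le_of_norm_lt_one x hx
  rw [NormedRing.inverse_one_sub_nth_order' N hx, add_sub_cancel_left, div_eq_mul_inv]
  exact (norm_mul_le _ _).trans
    (mul_le_mul (norm_pow_le x N) h_inv (norm_nonneg _) (by positivity))

lemma pow_mul_le_of_log_sub_log_div_log_le {a b c : ℝ} (ha : 0 < a) (ha1 : a < 1) (hb : 0 < b)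
    (hc : 0 < c) {N : ℕ} (hN : (Real.log c - Real.log b) / Real.log a ≤ N) : a ^ N * b ≤ c := by
  have ha_pow : 0 < a ^ N := pow_pos ha N
  rw [div_le_iff_of_neg (Real.log_neg ha ha1)] at hN
  rw [← Real.log_le_log_iff (mul_pos ha_pow hb) hc, Real.log_mul ha_pow.ne' hb.ne', Real.log_pow]
  linarith

end TruncatedGeometricSeries

section LinftyOpNorm

open scoped Matrix.Norms.Operator

variable {m n : Type*} [Fintype m] [Fintype n]

lemma linfty_opNorm_le_of_forall_sum_norm_le {α : Type*} [SeminormedAddCommGroup α]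
    {A : Matrix m n α} {c : ℝ} (hc : 0 ≤ c) (hA : ∀ i, ∑ j, ‖A i j‖ ≤ c) : ‖A‖ ≤ c := by
  lift c to NNReal using hc
  rw [linfty_opNorm_def, NNReal.coe_le_coe]
  exact Finset.sup_le fun i _ => by simpa [← NNReal.coe_le_coe] using hA i

lemma norm_inv_one_sub_sub_geom_sum_mulVec_le [DecidableEq n] [Nonempty n] {A : Matrix n n ℝ}
    {a : ℝ} (hA : ‖A‖ ≤ a) (ha : a < 1) (v : n → ℝ) (N : ℕ) :
    ‖((1 - A)⁻¹ - ∑ k ∈ range N, A ^ k) *ᵥ v‖ ≤ a ^ N / (1 - a) * ‖v‖ := by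
  rw [nonsing_inv_eq_ringInverse]
  have ha0 : 0 ≤ a := (norm_nonneg A).trans hA
  have : 0 < 1 - a := sub_pos.2 ha
  calc ‖(Ring.inverse (1 - A) - ∑ k ∈ range N, A ^ k) *ᵥ v‖
      ≤ ‖Ring.inverse (1 - A) - ∑ k ∈ range N, A ^ k‖ * ‖v‖ := linfty_opNorm_mulVec _ _
    _ ≤ ‖A‖ ^ N / (1 - ‖A‖) * ‖v‖ := by
        gcongr
        exact norm_inverse_one_sub_sub_geom_sum_le (hA.trans_lt ha) N
    _ ≤ a ^ N / (1 - a) * ‖v‖ := by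
        gcongr

end LinftyOpNorm

section Absorption

variable {n : ℕ} {W : Matrix (Fin n) (Fin n) ℝ} {θv : Fin n → ℝ} {θ ω : ℝ} {S : Finset (Fin n)}

/-- The probabilities `(I - Θ) ω Σ_{j∈S} e_j` of being absorbed at the influencer in the next step,
indexed by the current state. -/
noncomputable def stepAbsorptionProb (θv : Fin n → ℝ) (ω : ℝ) (S : Finset (Fin n)) : Fin n → ℝ :=
  (1 - diagonal θv) *ᵥ fun j => if j ∈ S then ω else 0

/-- The probability `q` that a walk started uniformly on `V` is absorbed at the influencer. -/
noncomputable def absorptionProb (W : Matrix (Fin n) (Fin n) ℝ) (θv : Fin n → ℝ) (ω : ℝ)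
    (S : Finset (Fin n)) : ℝ :=
  (1 / n) * ∑ i, ((1 - Hmat W θv ω S)⁻¹ *ᵥ stepAbsorptionProb θv ω S) i

/-- The truncated absorbing probability `p_ℓ`: the Neumann series `∑ H(S)^k` of `(I - H(S))⁻¹` is
cut after `k = ℓ`. -/
noncomputable def truncatedAbsorptionProb (W : Matrix (Fin n) (Fin n) ℝ) (θv : Fin n → ℝ) (ω : ℝ)
    (S : Finset (Fin n)) (ℓ : ℕ) : ℝ :=
  (1 / n) * ∑ i, ((∑ k ∈ range (ℓ + 1), Hmat W θv ω S ^ k) *ᵥ stepAbsorptionProb θv ω S) i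

lemma one_sub_diagonal {ι R : Type*} [DecidableEq ι] [Ring R] (d : ι → R) :
    1 - diagonal d = diagonal (1 - d) := by
  rw [← diagonal_one, diagonal_sub]
  rfl

lemma norm_one_sub_le {ι : Type*} [Fintype ι] {d : ι → ℝ} {a : ℝ} (hd : ∀ i, a ≤ d i ∧ d i ≤ 1)
    (ha : a ≤ 1) : ‖1 - d‖ ≤ 1 - a := by
  refine (pi_norm_le_iff_of_nonneg (sub_nonneg.2 ha)).2 fun i => ?_
  rw [Pi.sub_apply, Pi.one_apply, Real.norm_of_nonneg (sub_nonneg.2 (hd i).2)]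
  exact sub_le_sub_left (hd i).1 1

lemma Hmat_nonneg (hW : ∀ i j, 0 ≤ W i j) (hθv : ∀ i, θv i ≤ 1) (hω : ω ≤ 1) (i j : Fin n) :
    0 ≤ Hmat W θv ω S i j := by
  have h_link : 0 ≤ 1 - if i ∈ S then ω else 0 := by split_ifs <;> linarith
  rw [Hmat, one_sub_diagonal, one_sub_diagonal, diagonal_mul, diagonal_mul]
  exact mul_nonneg h_link (mul_nonneg (sub_nonneg.2 (hθv i)) (hW i j))

open scoped Matrix.Norms.Operator in
lemma norm_Hmat_le (hW : ‖W‖ ≤ 1) (hθv : ∀ i, θ ≤ θv i ∧ θv i ≤ 1) (hθ : θ ≤ 1)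
    (hω : ω ∈ Set.Icc (0 : ℝ) 1) : ‖Hmat W θv ω S‖ ≤ 1 - θ := by
  have h_link : ‖1 - diagonal fun i => if i ∈ S then ω else 0‖ ≤ 1 := by
    rw [one_sub_diagonal, linfty_opNorm_diagonal]
    simpa using norm_one_sub_le (a := 0) (d := fun i => if i ∈ S then ω else 0)
      (fun i => by split_ifs <;> simp [hω.1, hω.2]) zero_le_one
  have h_stubborn : ‖1 - diagonal θv‖ ≤ 1 - θ := by
    rw [one_sub_diagonal, linfty_opNorm_diagonal]
    exact norm_one_sub_le hθv hθ
  have : 0 ≤ 1 - θ := sub_nonneg.2 hθ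
  calc ‖Hmat W θv ω S‖
      ≤ ‖1 - diagonal fun i => if i ∈ S then ω else 0‖ * (‖1 - diagonal θv‖ * ‖W‖) :=
        (linfty_opNorm_mul _ _).trans (by gcongr; exact linfty_opNorm_mul _ _)
    _ ≤ 1 * ((1 - θ) * 1) := by gcongr
    _ = 1 - θ := by ring

lemma stepAbsorptionProb_apply (i : Fin n) :
    stepAbsorptionProb θv ω S i = (1 - θv i) * if i ∈ S then ω else 0 := by
  rw [stepAbsorptionProb, one_sub_diagonal, mulVec_diagonal, Pi.sub_apply, Pi.one_apply]

lemma stepAbsorptionProb_nonneg (hθv : ∀ i, θv i ≤ 1) (hω : 0 ≤ ω) :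
    0 ≤ stepAbsorptionProb θv ω S := fun i => by
  rw [stepAbsorptionProb_apply]
  exact mul_nonneg (sub_nonneg.2 (hθv i)) (by split_ifs <;> simp [hω])

lemma norm_stepAbsorptionProb_le (hθv : ∀ i, θ ≤ θv i ∧ θv i ≤ 1) (hθ : θ ≤ 1) (hω : 0 ≤ ω) :
    ‖stepAbsorptionProb θv ω S‖ ≤ (1 - θ) * ω := by
  have h_link : ‖fun j : Fin n => if j ∈ S then ω else 0‖ ≤ ω :=
    (pi_norm_le_iff_of_nonneg hω).2 fun j => by split_ifs <;> simp [abs_of_nonneg, hω]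
  have h_mul : stepAbsorptionProb θv ω S = (1 - θv) * fun j => if j ∈ S then ω else 0 :=
    funext stepAbsorptionProb_apply
  rw [h_mul]
  exact (norm_mul_le _ _).trans
    (mul_le_mul (norm_one_sub_le hθv hθ) h_link (norm_nonneg _) (sub_nonneg.2 hθ))

lemma stepAbsorptionProb_le_geom_sum_mulVec (hW : ∀ i j, 0 ≤ W i j) (hθv : ∀ i, θv i ≤ 1)
    (hω : ω ∈ Set.Icc (0 : ℝ) 1) (ℓ : ℕ) :
    stepAbsorptionProb θv ω S ≤
      (∑ k ∈ range (ℓ + 1), Hmat W θv ω S ^ k) *ᵥ stepAbsorptionProb θv ω S := by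
  have h_terms (k : ℕ) : 0 ≤ Hmat W θv ω S ^ k *ᵥ stepAbsorptionProb θv ω S := fun i =>
    dotProduct_nonneg_of_nonneg (fun j => pow_apply_nonneg (Hmat_nonneg hW hθv hω.2) k i j)
      (stepAbsorptionProb_nonneg hθv hω.1)
  rw [sum_mulVec]
  simpa using single_le_sum (f := fun k => Hmat W θv ω S ^ k *ᵥ stepAbsorptionProb θv ω S)
    (fun k _ => h_terms k) (mem_range.2 ℓ.succ_pos)

lemma truncatedAbsorptionProb_pos (hW : ∀ i j, 0 ≤ W i j) (hθv : ∀ i, θv i ≤ 1)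
    (hω : ω ∈ Set.Ioc (0 : ℝ) 1) (hS : ∃ i ∈ S, θv i < 1) (ℓ : ℕ) :
    0 < truncatedAbsorptionProb W θv ω S ℓ := by
  obtain ⟨s, hsS, hs⟩ := hS
  have h_le := stepAbsorptionProb_le_geom_sum_mulVec (S := S) hW hθv ⟨hω.1.le, hω.2⟩ ℓ
  have h_step : 0 < stepAbsorptionProb θv ω S s := by
    rw [stepAbsorptionProb_apply, if_pos hsS]
    exact mul_pos (sub_pos.2 hs) hω.1
  refine mul_pos (one_div_pos.2 (Nat.cast_pos.2 s.pos)) ?_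
  exact sum_pos' (fun i _ => (stepAbsorptionProb_nonneg hθv hω.1.le i).trans (h_le i))
    ⟨s, mem_univ s, h_step.trans_le (h_le s)⟩

lemma abs_mean_le_norm {ι : Type*} [Fintype ι] (y : ι → ℝ) :
    |(1 / Fintype.card ι) * ∑ i, y i| ≤ ‖y‖ := by
  have h_sum : |∑ i, y i| ≤ ‖y‖ * Fintype.card ι := by
    simpa [mul_comm] using (abs_sum_le_sum_abs y univ).trans (Pi.sum_norm_apply_le_norm y)
  rw [one_div_mul_eq_div, abs_div, Nat.abs_cast]
  exact div_le_of_le_mul₀ (Nat.cast_nonneg _) (norm_nonneg y) h_sum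

lemma abs_absorptionProb_sub_truncatedAbsorptionProb_le [NeZero n] (hW : ∀ i j, 0 ≤ W i j)
    (hW1 : ∀ i, ∑ j, W i j ≤ 1) (hθ : θ ∈ Set.Ioc (0 : ℝ) 1)
    (hθv : ∀ i, θ ≤ θv i ∧ θv i ≤ 1) (hω : ω ∈ Set.Icc (0 : ℝ) 1) (ℓ : ℕ) :
    |absorptionProb W θv ω S - truncatedAbsorptionProb W θv ω S ℓ| ≤
      (1 - θ) ^ (ℓ + 2) * ω / θ := by
  open scoped Matrix.Norms.Operator in
  have hW_norm : ‖W‖ ≤ 1 := linfty_opNorm_le_of_forall_sum_norm_le zero_le_one fun i => by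
    simpa only [Real.norm_of_nonneg (hW i _)] using hW1 i
  have hθ0 : 0 < θ := hθ.1
  have hθ1 : 0 ≤ 1 - θ := sub_nonneg.2 hθ.2
  set v := stepAbsorptionProb θv ω S with hv
  set y := ((1 - Hmat W θv ω S)⁻¹ - ∑ k ∈ range (ℓ + 1), Hmat W θv ω S ^ k) *ᵥ v with hy
  calc |absorptionProb W θv ω S - truncatedAbsorptionProb W θv ω S ℓ|
      = |(1 / n) * ∑ i, y i| := by
        simp only [absorptionProb, truncatedAbsorptionProb, hy, hv, sub_mulVec, Pi.sub_apply,
          sum_sub_distrib, mul_sub]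
    _ ≤ ‖y‖ := by simpa only [Fintype.card_fin] using abs_mean_le_norm y
    _ ≤ (1 - θ) ^ (ℓ + 1) / (1 - (1 - θ)) * ‖v‖ :=
        norm_inv_one_sub_sub_geom_sum_mulVec_le (norm_Hmat_le hW_norm hθv hθ.2 hω)
          (sub_lt_self 1 hθ0) v (ℓ + 1)
    _ ≤ (1 - θ) ^ (ℓ + 1) / θ * ((1 - θ) * ω) := by
        rw [sub_sub_cancel]
        gcongr
        exact norm_stepAbsorptionProb_le hθv hθ.2 hω.1
    _ = (1 - θ) ^ (ℓ + 2) * ω / θ := by ring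

lemma abs_absorptionProb_sub_truncatedAbsorptionProb_le_of_length_ge [NeZero n]
    (hW : ∀ i j, 0 ≤ W i j) (hW1 : ∀ i, ∑ j, W i j ≤ 1) (hθ : θ ∈ Set.Ioo (0 : ℝ) 1)
    (hθv : ∀ i, θ ≤ θv i ∧ θv i ≤ 1) (hω : ω ∈ Set.Ioc (0 : ℝ) 1) {τ : ℝ} (hτ : 0 < τ) {ℓ : ℕ}
    (hℓ : (Real.log (θ * τ) - Real.log ω) / Real.log (1 - θ) - 2 ≤ ℓ) :
    |absorptionProb W θv ω S - truncatedAbsorptionProb W θv ω S ℓ| ≤ τ := by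
  refine (abs_absorptionProb_sub_truncatedAbsorptionProb_le hW hW1 ⟨hθ.1, hθ.2.le⟩ hθv
    ⟨hω.1.le, hω.2⟩ ℓ).trans ?_
  rw [div_le_iff₀' hθ.1]
  refine pow_mul_le_of_log_sub_log_div_log_le (sub_pos.2 hθ.2) (sub_lt_self 1 hθ.1) hω.1
    (mul_pos hθ.1 hτ) ?_
  push_cast
  linarith

end Absorption

section Chernoff

open MeasureTheory ProbabilityTheory

lemma add_sq_div_three_le_mul_log {η : ℝ} (hη : 0 ≤ η) (hη1 : η ≤ 1) :
    η + η ^ 2 / 3 ≤ (1 + η) * Real.log (1 + η) := by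
  calc η + η ^ 2 / 3 ≤ (1 + η) * (2 * η / (η + 2)) := by
        rw [mul_div_assoc', le_div_iff₀ (by linarith)]
        nlinarith [mul_nonneg (sq_nonneg η) (sub_nonneg.2 hη1)]
    _ ≤ (1 + η) * Real.log (1 + η) := by
        gcongr
        exact Real.le_log_one_add_of_nonneg hη

lemma exp_neg_le_one_sub_add_sq_div_two {η : ℝ} (hη : 0 ≤ η) :
    Real.exp (-η) ≤ 1 - η + η ^ 2 / 2 := by
  have h_pos : 0 ≤ 1 - η + η ^ 2 / 2 := by nlinarith [sq_nonneg (η - 1)]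
  rw [Real.exp_neg, inv_le_iff_one_le_mul₀ (Real.exp_pos _)]
  calc (1 : ℝ) ≤ (1 - η + η ^ 2 / 2) * (1 + η + η ^ 2 / 2) := by nlinarith [sq_nonneg (η ^ 2)]
    _ ≤ (1 - η + η ^ 2 / 2) * Real.exp η := by
        gcongr
        exact Real.quadratic_le_exp_of_nonneg hη

lemma exp_mul_le_one_add_mul {x : ℝ} (hx : x ∈ Set.Icc (0 : ℝ) 1) (t : ℝ) :
    Real.exp (t * x) ≤ 1 + (Real.exp t - 1) * x := by
  have h := convexOn_exp.2 (Set.mem_univ 0) (Set.mem_univ t) (sub_nonneg.2 hx.2) hx.1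
    (sub_add_cancel 1 x)
  simp only [smul_eq_mul, mul_zero, zero_add, Real.exp_zero, mul_one] at h
  rw [mul_comm t x]
  linarith

lemma sum_integral_nonneg_of_mem_Icc_zero_one {Ω ι : Type*} [MeasurableSpace Ω] {μ : Measure Ω}
    {X : ι → Ω → ℝ} (hX01 : ∀ i, ∀ᵐ w ∂μ, X i w ∈ Set.Icc (0 : ℝ) 1) (s : Finset ι) :
    0 ≤ ∑ i ∈ s, μ[X i] :=
  sum_nonneg fun i _ => integral_nonneg_of_ae ((hX01 i).mono fun _ hw => hw.1)

lemma integrable_exp_mul_sum_of_mem_Icc_zero_one {Ω ι : Type*} [MeasurableSpace Ω] {μ : Measure Ω}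
    [IsFiniteMeasure μ] {X : ι → Ω → ℝ} (hX : ∀ i, AEMeasurable (X i) μ)
    (hX01 : ∀ i, ∀ᵐ w ∂μ, X i w ∈ Set.Icc (0 : ℝ) 1) (s : Finset ι) (t : ℝ) :
    Integrable (fun w => Real.exp (t * (∑ i ∈ s, X i) w)) μ := by
  refine integrable_exp_mul_of_mem_Icc (a := 0) (b := #s) (s.aemeasurable_sum fun i _ => hX i) ?_
  filter_upwards [(s.eventually_all (l := ae μ)).2 fun i _ => hX01 i] with w hw
  rw [Finset.sum_apply]
  exact ⟨sum_nonneg fun i hi => (hw i hi).1,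
    by simpa using sum_le_card_nsmul s (X · w) 1 fun i hi => (hw i hi).2⟩

lemma integral_eq_measureReal_of_eq_zero_or_one {Ω : Type*} [MeasurableSpace Ω] {μ : Measure Ω}
    {X : Ω → ℝ} (hX : Measurable X) (hX01 : ∀ w, X w = 0 ∨ X w = 1) :
    μ[X] = μ.real {w | X w = 1} := by
  have h_ind : X = {w | X w = 1}.indicator 1 := by
    funext w
    rcases hX01 w with h | h <;> simp [Set.indicator, h]
  conv_lhs => rw [h_ind]
  exact integral_indicator_one (hX (measurableSet_singleton 1))

variable {Ω : Type*} [MeasurableSpace Ω] {μ : Measure Ω} [IsProbabilityMeasure μ]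

lemma mgf_le_exp_of_mem_Icc_zero_one {X : Ω → ℝ} (hX : AEMeasurable X μ)
    (hX01 : ∀ᵐ w ∂μ, X w ∈ Set.Icc (0 : ℝ) 1) (t : ℝ) :
    mgf X μ t ≤ Real.exp (μ[X] * (Real.exp t - 1)) := by
  have hX_int : Integrable (fun w => (Real.exp t - 1) * X w) μ :=
    (Integrable.of_mem_Icc 0 1 hX hX01).const_mul _
  calc mgf X μ t ≤ ∫ w, 1 + (Real.exp t - 1) * X w ∂μ :=
        integral_mono_ae (integrable_exp_mul_of_mem_Icc hX hX01) ((integrable_const 1).add hX_int)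
          (hX01.mono fun w hw => exp_mul_le_one_add_mul hw t)
    _ = μ[X] * (Real.exp t - 1) + 1 := by
        rw [integral_add (integrable_const 1) hX_int, integral_const_mul]
        simp only [integral_const, probReal_univ, one_smul]
        ring
    _ ≤ Real.exp (μ[X] * (Real.exp t - 1)) := Real.add_one_le_exp _

variable {ι : Type*} {X : ι → Ω → ℝ}

lemma mgf_sum_le_exp_of_mem_Icc_zero_one (hX : ∀ i, AEMeasurable (X i) μ) (h_indep : iIndepFun X μ)
    (hX01 : ∀ i, ∀ᵐ w ∂μ, X i w ∈ Set.Icc (0 : ℝ) 1) (s : Finset ι) (t : ℝ) :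
    mgf (∑ i ∈ s, X i) μ t ≤ Real.exp ((∑ i ∈ s, μ[X i]) * (Real.exp t - 1)) := by
  rw [h_indep.mgf_sum₀ hX, sum_mul, Real.exp_sum]
  exact prod_le_prod (fun _ _ => mgf_nonneg)
    fun i _ => mgf_le_exp_of_mem_Icc_zero_one (hX i) (hX01 i) t

lemma measureReal_one_add_mul_le_sum_le (hX : ∀ i, AEMeasurable (X i) μ) (h_indep : iIndepFun X μ)
    (hX01 : ∀ i, ∀ᵐ w ∂μ, X i w ∈ Set.Icc (0 : ℝ) 1) (s : Finset ι) {η : ℝ} (hη : 0 ≤ η)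
    (hη1 : η ≤ 1) :
    μ.real {w | (1 + η) * ∑ i ∈ s, μ[X i] ≤ (∑ i ∈ s, X i) w} ≤
      Real.exp (-((∑ i ∈ s, μ[X i]) * η ^ 2 / 3)) := by
  set m := ∑ i ∈ s, μ[X i]
  have hm0 : 0 ≤ m := sum_integral_nonneg_of_mem_Icc_zero_one hX01 s
  have h_exp : Real.exp (Real.log (1 + η)) = 1 + η := Real.exp_log (by linarith)
  -- `t = log (1 + η)` minimises the exponent `m * (exp t - 1) - t * ((1 + η) * m)`.
  calc μ.real {w | (1 + η) * m ≤ (∑ i ∈ s, X i) w}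
      ≤ Real.exp (-Real.log (1 + η) * ((1 + η) * m)) *
          mgf (∑ i ∈ s, X i) μ (Real.log (1 + η)) :=
        measure_ge_le_exp_mul_mgf _ (Real.log_nonneg (by linarith))
          (integrable_exp_mul_sum_of_mem_Icc_zero_one hX hX01 s _)
    _ ≤ Real.exp (-Real.log (1 + η) * ((1 + η) * m)) *
          Real.exp (m * (Real.exp (Real.log (1 + η)) - 1)) := by
        gcongr
        exact mgf_sum_le_exp_of_mem_Icc_zero_one hX h_indep hX01 s _
    _ ≤ Real.exp (-(m * η ^ 2 / 3)) := by
        rw [← Real.exp_add, Real.exp_le_exp, h_exp]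
        linear_combination m * add_sq_div_three_le_mul_log hη hη1

lemma measureReal_sum_le_one_sub_mul_le (hX : ∀ i, AEMeasurable (X i) μ) (h_indep : iIndepFun X μ)
    (hX01 : ∀ i, ∀ᵐ w ∂μ, X i w ∈ Set.Icc (0 : ℝ) 1) (s : Finset ι) {η : ℝ} (hη : 0 ≤ η) :
    μ.real {w | (∑ i ∈ s, X i) w ≤ (1 - η) * ∑ i ∈ s, μ[X i]} ≤
      Real.exp (-((∑ i ∈ s, μ[X i]) * η ^ 2 / 2)) := by
  set m := ∑ i ∈ s, μ[X i]
  have hm0 : 0 ≤ m := sum_integral_nonneg_of_mem_Icc_zero_one hX01 s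
  -- The minimiser `t = log (1 - η)` needs `η < 1`; `t = -η` gives the same bound for all `η`.
  calc μ.real {w | (∑ i ∈ s, X i) w ≤ (1 - η) * m}
      ≤ Real.exp (-(-η) * ((1 - η) * m)) * mgf (∑ i ∈ s, X i) μ (-η) :=
        measure_le_le_exp_mul_mgf _ (neg_nonpos.2 hη)
          (integrable_exp_mul_sum_of_mem_Icc_zero_one hX hX01 s _)
    _ ≤ Real.exp (-(-η) * ((1 - η) * m)) * Real.exp (m * (Real.exp (-η) - 1)) := by
        gcongr
        exact mgf_sum_le_exp_of_mem_Icc_zero_one hX h_indep hX01 s _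
    _ ≤ Real.exp (-(m * η ^ 2 / 2)) := by
        rw [← Real.exp_add, Real.exp_le_exp]
        linear_combination m * exp_neg_le_one_sub_add_sq_div_two hη

lemma measureReal_mul_le_abs_sum_sub_le (hX : ∀ i, AEMeasurable (X i) μ) (h_indep : iIndepFun X μ)
    (hX01 : ∀ i, ∀ᵐ w ∂μ, X i w ∈ Set.Icc (0 : ℝ) 1) (s : Finset ι) {η : ℝ} (hη : 0 ≤ η)
    (hη1 : η ≤ 1) :
    μ.real {w | η * ∑ i ∈ s, μ[X i] ≤ |∑ i ∈ s, X i w - ∑ i ∈ s, μ[X i]|} ≤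
      2 * Real.exp (-((∑ i ∈ s, μ[X i]) * η ^ 2 / 3)) := by
  have h_upper := measureReal_one_add_mul_le_sum_le hX h_indep hX01 s hη hη1
  have h_lower := measureReal_sum_le_one_sub_mul_le hX h_indep hX01 s hη
  set m := ∑ i ∈ s, μ[X i]
  have hm0 : 0 ≤ m := sum_integral_nonneg_of_mem_Icc_zero_one hX01 s
  have h_cover : {w | η * m ≤ |∑ i ∈ s, X i w - m|} ⊆
      {w | (1 + η) * m ≤ (∑ i ∈ s, X i) w} ∪ {w | (∑ i ∈ s, X i) w ≤ (1 - η) * m} := by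
    intro w hw
    simp only [Set.mem_union, Set.mem_ofPred_eq, Finset.sum_apply] at hw ⊢
    exact (le_abs.1 hw).imp (fun h => by linarith) (fun h => by linarith)
  have h_exp : Real.exp (-(m * η ^ 2 / 2)) ≤ Real.exp (-(m * η ^ 2 / 3)) := by
    gcongr
    norm_num
  calc μ.real {w | η * m ≤ |∑ i ∈ s, X i w - m|}
      ≤ μ.real {w | (1 + η) * m ≤ (∑ i ∈ s, X i) w} +
          μ.real {w | (∑ i ∈ s, X i) w ≤ (1 - η) * m} :=
        (measureReal_mono h_cover).trans (measureReal_union_le _ _)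
    _ ≤ 2 * Real.exp (-(m * η ^ 2 / 3)) := by linarith

lemma measureReal_mul_le_abs_mean_sub_le_of_card_ge [Fintype ι] (hX : ∀ i, AEMeasurable (X i) μ)
    (h_indep : iIndepFun X μ) (hX01 : ∀ i, ∀ᵐ w ∂μ, X i w ∈ Set.Icc (0 : ℝ) 1) {p : ℝ}
    (hp : 0 < p) (hXp : ∀ i, μ[X i] = p) {η δ : ℝ} (hη : η ∈ Set.Ioc (0 : ℝ) 1)
    (hδ : δ ∈ Set.Ioo (0 : ℝ) 1)
    (hr : 3 * Real.log (2 / δ) / (η ^ 2 * p) ≤ Fintype.card ι) :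
    μ.real {w | η * p ≤ |(∑ i, X i w) / Fintype.card ι - p|} ≤ δ := by
  obtain ⟨hδ0, hδ1⟩ := hδ
  have hη0 : 0 < η := hη.1
  have h_log : 0 < Real.log (2 / δ) := Real.log_pos (by rw [lt_div_iff₀ hδ0]; linarith)
  have hr0 : (0 : ℝ) < Fintype.card ι := lt_of_lt_of_le (by positivity) hr
  rw [div_le_iff₀ (by positivity)] at hr
  have h_mean : ∑ i, μ[X i] = Fintype.card ι * p := by simp [hXp]
  have h_event : {w | η * p ≤ |(∑ i, X i w) / Fintype.card ι - p|} =
      {w | η * ∑ i, μ[X i] ≤ |∑ i, X i w - ∑ i, μ[X i]|} := by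
    ext w
    have h_scale : ∑ i, X i w - Fintype.card ι * p =
        Fintype.card ι * ((∑ i, X i w) / Fintype.card ι - p) := by field_simp
    rw [Set.mem_ofPred_eq, Set.mem_ofPred_eq, h_mean, h_scale, abs_mul, Nat.abs_cast, mul_left_comm,
      mul_le_mul_iff_right₀ hr0]
  calc μ.real {w | η * p ≤ |(∑ i, X i w) / Fintype.card ι - p|}
      ≤ 2 * Real.exp (-(Fintype.card ι * p * η ^ 2 / 3)) := by
        rw [h_event, ← h_mean]
        exact measureReal_mul_le_abs_sum_sub_le hX h_indep hX01 univ hη0.le hη.2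
    _ ≤ 2 * Real.exp (-Real.log (2 / δ)) := by
        gcongr
        linarith
    _ = δ := by
        rw [Real.exp_neg, Real.exp_log (by positivity)]
        field_simp

lemma ofReal_one_sub_le_measure_of_compl_subset {s t : Set Ω} {δ : ℝ} (hst : sᶜ ⊆ t)
    (ht : μ.real t ≤ δ) : ENNReal.ofReal (1 - δ) ≤ μ s := by
  have h_univ : 1 ≤ μ.real s + μ.real sᶜ := by
    simpa [Set.union_compl_self] using measureReal_union_le (μ := μ) s sᶜ
  have h_compl : μ.real sᶜ ≤ δ := (measureReal_mono hst).trans ht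
  rw [← ofReal_measureReal (μ := μ) (s := s)]
  exact ENNReal.ofReal_le_ofReal (by linarith)

end Chernoff

open MeasureTheory ProbabilityTheory in
theorem sampling_high_probability_bound_general
    {n : ℕ} {W : Matrix (Fin n) (Fin n) ℝ} (hW0 : ∀ i j, 0 ≤ W i j) (hW1 : ∀ i, ∑ j, W i j ≤ 1)
    {θv : Fin n → ℝ} {θ : ℝ} (hθ : 0 < θ) (hθv : ∀ i, θ ≤ θv i ∧ θv i ≤ 1)
    {ω : ℝ} (hω : ω ∈ Set.Ioc (0 : ℝ) 1) {S : Finset (Fin n)} (hSθ : ∃ i ∈ S, θv i < 1)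
    {ℓ : ℕ} {ε δ σ : ℝ} (hε : 0 < ε) (hδ : δ ∈ Set.Ioo (0 : ℝ) 1) (hσ : σ ∈ Set.Ioo (0 : ℝ) 1)
    (hσε : σ * ε ≤ 1) {p q : ℝ} (hp : p = truncatedAbsorptionProb W θv ω S ℓ)
    (hq : q = absorptionProb W θv ω S)
    (hℓ : (Real.log (θ * (1 - σ) * ε * p) - Real.log ω) / Real.log (1 - θ) - 2 ≤ ℓ)
    {Ω ι : Type*} [MeasurableSpace Ω] {μ : Measure Ω} [IsProbabilityMeasure μ] [Fintype ι]
    (hr : 3 * Real.log (2 / δ) / (σ ^ 2 * ε ^ 2 * p) ≤ Fintype.card ι)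
    {X : ι → Ω → ℝ} (hX : ∀ k, AEMeasurable (X k) μ) (h_indep : iIndepFun X μ)
    (hX01 : ∀ k, ∀ᵐ w ∂μ, X k w ∈ Set.Icc (0 : ℝ) 1) (hXp : ∀ k, μ[X k] = p) :
    ENNReal.ofReal (1 - δ) ≤ μ {w | |(∑ k, X k w) / Fintype.card ι - q| < ε * p} := by
  have hp0 : 0 < p := hp ▸ truncatedAbsorptionProb_pos hW0 (fun i => (hθv i).2) hω hSθ ℓ
  obtain ⟨s, -, hs⟩ := hSθ
  have : NeZero n := ⟨s.pos.ne'⟩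
  have h_trunc : |q - p| ≤ (1 - σ) * ε * p := by
    have hτ : 0 < (1 - σ) * ε * p := mul_pos (mul_pos (sub_pos.2 hσ.2) hε) hp0
    have h_le := abs_absorptionProb_sub_truncatedAbsorptionProb_le_of_length_ge (S := S) hW0 hW1
      ⟨hθ, (hθv s).1.trans_lt hs⟩ hθv hω hτ (by simpa only [mul_assoc] using hℓ)
    rwa [← hp, ← hq] at h_le
  have h_sample : μ.real {w | σ * ε * p ≤ |(∑ k, X k w) / Fintype.card ι - p|} ≤ δ :=
    measureReal_mul_le_abs_mean_sub_le_of_card_ge hX h_indep hX01 hp0 hXp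
      ⟨mul_pos hσ.1 hε, hσε⟩ hδ (by rwa [mul_pow])
  refine ofReal_one_sub_le_measure_of_compl_subset (fun w hw => ?_) h_sample
  rw [Set.mem_compl_iff, Set.mem_ofPred_eq, not_lt] at hw
  rw [Set.mem_ofPred_eq]
  linarith [abs_sub_le ((∑ k, X k w) / Fintype.card ι) p q, abs_sub_comm p q]

open MeasureTheory ProbabilityTheory in
/-- High-probability bound for the random-walk sampling approximation of the
influencer's social power. -/
theorem sampling_high_probability_bound
    (n : ℕ) (hn : 1 ≤ n) (W : Matrix (Fin n) (Fin n) ℝ)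
    (hW0 : ∀ i j, 0 ≤ W i j) (hW1 : ∀ i, ∑ j, W i j = 1)
    (hconn : ∀ i j : Fin n, ∃ k, 1 ≤ k ∧ 0 < (W ^ k) i j)
    (θv : Fin n → ℝ) (θ : ℝ) (hθ : θ ∈ Set.Ioc (0 : ℝ) 1)
    (hθv : ∀ i, θ ≤ θv i ∧ θv i ≤ 1)
    (ω : ℝ) (hω : ω ∈ Set.Ioo (0 : ℝ) 1)
    (S : Finset (Fin n)) (hS : S.Nonempty) (hSθ : ∃ i ∈ S, θv i < 1)
    (ℓ r : ℕ) (ε δ σ : ℝ)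
    (hε : ε ∈ Set.Ioo (0 : ℝ) 1) (hδ : δ ∈ Set.Ioo (0 : ℝ) 1) (hσ : σ ∈ Set.Ioo (0 : ℝ) 1)
    -- truncated absorbing probability `p_ℓ`
    (p : ℝ)
    (hp : p = (1 / n) * ∑ i, ((∑ k ∈ Finset.range (ℓ + 1), Hmat W θv ω S ^ k) *
      (1 - Matrix.diagonal θv)).mulVec (fun j => if j ∈ S then ω else 0) i)
    -- exact absorbing probability `q`
    (q : ℝ)
    (hq : q = (1 / n) * ∑ i, ((1 - Hmat W θv ω S)⁻¹ *
      (1 - Matrix.diagonal θv)).mulVec (fun j => if j ∈ S then ω else 0) i)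
    (hr : 3 * Real.log (2 / δ) / (σ ^ 2 * ε ^ 2 * p) ≤ (r : ℝ))
    (hℓ : (Real.log (θ * (1 - σ) * ε * p) - Real.log ω) / Real.log (1 - θ) - 2 ≤ (ℓ : ℝ))
    {Ω : Type} [MeasurableSpace Ω] (μ : Measure Ω) [IsProbabilityMeasure μ]
    (X : Fin r → Ω → ℝ) (hXmeas : ∀ k, Measurable (X k))
    (hXindep : iIndepFun X μ)
    (hX01 : ∀ k ωp, X k ωp = 0 ∨ X k ωp = 1)
    (hX1 : ∀ k, μ {ωp | X k ωp = 1} = ENNReal.ofReal p) :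
    ENNReal.ofReal (1 - δ) ≤ μ {ωp | |(∑ k, X k ωp) / (r : ℝ) - q| < ε * p} := by
  simp only [← mulVec_mulVec] at hp hq
  have hp0 : 0 < p := hp ▸ truncatedAbsorptionProb_pos hW0 (fun i => (hθv i).2)
    ⟨hω.1, hω.2.le⟩ hSθ ℓ
  have hX_mem (k : Fin r) (w : Ω) : X k w ∈ Set.Icc (0 : ℝ) 1 := by
    rcases hX01 k w with h | h <;> simp [h]
  have hX_mean (k : Fin r) : μ[X k] = p := by
    rw [integral_eq_measureReal_of_eq_zero_or_one (hXmeas k) (hX01 k), Measure.real, hX1,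
      ENNReal.toReal_ofReal hp0.le]
  simpa using sampling_high_probability_bound_general hW0 (fun i => (hW1 i).le) hθ.1 hθv
    ⟨hω.1, hω.2.le⟩ hSθ hε.1 hδ hσ (mul_le_one₀ hσ.2.le hε.1.le hε.2.le) hp hq hℓ
    (by simpa using hr) (fun k => (hXmeas k).aemeasurable) hXindep
    (fun k => ae_of_all μ (hX_mem k)) hX_mean
end

section
/- Let W be an n×n real row-stochastic matrix and ω ∈ [0,1]. For i ∈ V define H_i = (I − ω e_i e_iᵀ) W and g_i = (1 − ω) W_{ii} + Σ_{j ≠ i} W_{ji}. Then 𝟙ᵀ H_i² 𝟙 = n − ω − ω g_i. -/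
open Matrix Finset

/-! Since `I - ω e_i e_iᵀ` is the diagonal matrix of `p = 𝟙 - ω e_i`, we have `𝟙ᵀ H_i = pᵀ W`, and
`W 𝟙 = 𝟙` gives `H_i 𝟙 = p`. Hence `𝟙ᵀ H_i² 𝟙 = pᵀ W p`. Expanding the right factor `p` leaves
`pᵀ 𝟙 - (pᵀ W)_i ω`, and `(pᵀ W)_i` is exactly `g_i`. -/

variable {ι κ R : Type*}

theorem sum_sum_eq_one_dotProduct_mulVec_one [Fintype ι] [Fintype κ] [NonAssocSemiring R]
    (M : Matrix ι κ R) : ∑ a, ∑ b, M a b = 1 ⬝ᵥ M *ᵥ 1 := by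
  simp only [one_dotProduct, mulVec, dotProduct_one]

theorem one_sub_smul_single_eq_diagonal [DecidableEq ι] [Ring R] (ω : R) (i : ι) :
    1 - ω • Matrix.single i i (1 : R) = diagonal (1 - Pi.single i ω) := by
  rw [smul_single, smul_eq_mul, mul_one, ← diagonal_single, ← diagonal_one, diagonal_sub]
  rfl

variable [Fintype ι] [DecidableEq ι]

theorem one_dotProduct_diagonal_mul_sq_mulVec_one [Semiring R] {W : Matrix ι ι R}
    (hW : W *ᵥ 1 = 1) (p : ι → R) :
    1 ⬝ᵥ (diagonal p * W) ^ 2 *ᵥ 1 = p ⬝ᵥ W *ᵥ p := by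
  have diagonal_mulVec_one : diagonal p *ᵥ 1 = p := by
    ext a
    simp [mulVec_diagonal]
  have one_vecMul_diagonal : 1 ᵥ* diagonal p = p := by
    ext a
    simp [vecMul_diagonal]
  calc 1 ⬝ᵥ (diagonal p * W) ^ 2 *ᵥ 1
      = (1 ᵥ* diagonal p) ⬝ᵥ W *ᵥ diagonal p *ᵥ W *ᵥ 1 := by
        rw [← dotProduct_mulVec]
        simp only [pow_two, mulVec_mulVec, Matrix.mul_assoc]
    _ = p ⬝ᵥ W *ᵥ p := by rw [hW, diagonal_mulVec_one, one_vecMul_diagonal]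

theorem one_sub_single_vecMul_apply [Ring R] (W : Matrix ι κ R) (ω : R) (i : ι) (j : κ) :
    ((1 - Pi.single i ω) ᵥ* W) j = (1 - ω) * W i j + ∑ k ∈ univ.erase i, W k j := by
  rw [vecMul, dotProduct, ← add_sum_erase _ _ (mem_univ i)]
  congr 1
  · simp
  · refine sum_congr rfl fun k hk => ?_
    simp [ne_of_mem_erase hk]

theorem one_sub_single_dotProduct_mulVec [Ring R] {W : Matrix ι ι R}
    (hW : W *ᵥ 1 = 1) (ω : R) (i : ι) :
    (1 - Pi.single i ω) ⬝ᵥ W *ᵥ (1 - Pi.single i ω) =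
      Fintype.card ι - ω - ((1 - Pi.single i ω) ᵥ* W) i * ω := by
  rw [mulVec_sub, hW, dotProduct_sub, dotProduct_mulVec _ W, dotProduct_single, sub_dotProduct,
    one_dotProduct_one, single_dotProduct, Pi.one_apply, mul_one]

theorem ones_Hi_sq_ones_general [Ring R] (W : Matrix ι ι R) (hW : ∀ i, ∑ j, W i j = 1)
    (ω : R) (i : ι) :
    ∑ a, ∑ b, (((1 - ω • Matrix.single i i (1 : R)) * W : Matrix ι ι R) ^ 2) a b =
      Fintype.card ι - ω - ((1 - ω) * W i i + ∑ j ∈ univ.erase i, W j i) * ω := by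
  have hW_one : W *ᵥ 1 = 1 := by
    ext a
    rw [mulVec, dotProduct_one, hW, Pi.one_apply]
  rw [sum_sum_eq_one_dotProduct_mulVec_one, one_sub_smul_single_eq_diagonal,
    one_dotProduct_diagonal_mul_sq_mulVec_one hW_one, one_sub_single_dotProduct_mulVec hW_one,
    one_sub_single_vecMul_apply]

/-- `𝟙ᵀ H_i² 𝟙 = n - ω - ω g_i` where `H_i = (I - ω e_i e_iᵀ) W`. -/
theorem ones_Hi_sq_ones
    (n : ℕ) (hn : 1 ≤ n) (W : Matrix (Fin n) (Fin n) ℝ)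
    (hW0 : ∀ i j, 0 ≤ W i j) (hW1 : ∀ i, ∑ j, W i j = 1)
    (ω : ℝ) (hω : ω ∈ Set.Icc (0 : ℝ) 1) (i : Fin n) :
    ∑ a, ∑ b,
        ((((1 - ω • Matrix.single i i (1 : ℝ)) * W : Matrix (Fin n) (Fin n) ℝ) ^ 2)
          a b)
      = n - ω - ω * ((1 - ω) * W i i + ∑ j ∈ Finset.univ.erase i, W j i) := by
  rw [ones_Hi_sq_ones_general W hW1, Fintype.card_fin, mul_comm ω]
end
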